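/- arXiv:2103.05336 — 15 statements merged into one kernel-verified Lean document; each statement's English description precedes it below -/
import Mathlib

section
/- Let <₁ and <₂ be semi-linear strict partial orders on a finite set A. If the union <₁ ∪̄ <₂ (the transitive closure of the union of the two relations) is irreflexive, then <₁ ∪̄ <₂ is a semi-linear strict partial order on A. -/
variable {A : Type*}

/-- A strict partial order on `A`: an irreflexive and transitive relation. -/
def StrictPO (r : A → A → Prop) : Prop :=
  (∀ a, ¬ r a a) ∧ (∀ a b c, r a b → r b c → r a c)

/-- A strict partial order is semi-linear if it is induced by a surjection onto
`{1,…,l}` (modeled as `Fin l`). -/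
def SemiLinear (r : A → A → Prop) : Prop :=
  ∃ (l : ℕ) (h : A → Fin l), Function.Surjective h ∧ ∀ a b, r a b ↔ h a < h b

/-- The union `r ∪̄ s` of two relations: the transitive closure of their union. -/
def relUnion (r s : A → A → Prop) : A → A → Prop :=
  Relation.TransGen (fun a b => r a b ∨ s a b)

/-- A double order: a pair of strict partial orders such that any two distinct
elements are comparable by at least one of them. -/
def IsDoubleOrder (x y : A → A → Prop) : Prop :=
  StrictPO x ∧ StrictPO y ∧ ∀ a b : A, a ≠ b → x a b ∨ x b a ∨ y a b ∨ y b a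

/-- A regular double order: `x` is semi-linear and `x`-comparable elements are
`y`-incomparable. -/
def IsRegularDO (x y : A → A → Prop) : Prop :=
  IsDoubleOrder x y ∧ SemiLinear x ∧ ∀ a b, x a b → ¬ y a b ∧ ¬ y b a

/-- The right action of a permutation on a relation. -/
def permRel (σ : Equiv.Perm A) (r : A → A → Prop) : A → A → Prop :=
  fun a b => r (σ a) (σ b)

/-- A semi-regular double order: a componentwise union (transitive closure,
with both components irreflexive) of finitely many regular double orders. -/
def IsSemiRegular (x y : A → A → Prop) : Prop :=
  (∀ a, ¬ x a a) ∧ (∀ a, ¬ y a a) ∧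
  ∃ k : ℕ, 0 < k ∧ ∃ xs ys : Fin k → (A → A → Prop),
    (∀ i, IsRegularDO (xs i) (ys i)) ∧
    (∀ a b, x a b ↔ Relation.TransGen (fun u v => ∃ i, xs i u v) a b) ∧
    (∀ a b, y a b ↔ Relation.TransGen (fun u v => ∃ i, ys i u v) a b)

/-- The relation `y ∖ x`: `a (y ∖ x) b` iff `a y b` and `a, b` are `x`-incomparable. -/
def dminus (y x : A → A → Prop) : A → A → Prop :=
  fun a b => y a b ∧ ¬ x a b ∧ ¬ x b a

/-- The subset `U(<*)` of the space of functions `A → ℝ²` associated to a double order. -/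
def USet (x y : A → A → Prop) : Set (A → ℝ × ℝ) :=
  {f | ∀ a b, (x a b → (f a).1 < (f b).1) ∧ (y a b → (f a).2 < (f b).2)}

/-- A relation on a finite type that is the pullback of `<` along a map to a linear order is
semi-linear. -/
theorem SemiLinear.of_lt_iff {A B : Type*} [Finite A] [LinearOrder B] {r : A → A → Prop}
    (k : A → B) (hk : ∀ a b, r a b ↔ k a < k b) : SemiLinear r := by
  cases nonempty_fintype A
  let e := (Finset.univ.image k).orderIsoOfFin rfl
  refine ⟨_, fun a => e.symm ⟨k a, Finset.mem_image_of_mem k (Finset.mem_univ a)⟩, ?_, ?_⟩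
  · intro i
    obtain ⟨a, -, ha⟩ := Finset.mem_image.mp (e i).2
    exact ⟨a, by simp [ha]⟩
  · intro a b
    simp [hk]

/-- If the union of two semi-linear relations is irreflexive, it is the pullback of `<` along
the sum of the two rank functions. -/
theorem relUnion_iff_add_lt_add {A : Type*} {r s : A → A → Prop} {f g : A → ℕ}
    (hr : ∀ a b, r a b ↔ f a < f b) (hs : ∀ a b, s a b ↔ g a < g b)
    (hirr : ∀ a, ¬ relUnion r s a a) (a b : A) :
    relUnion r s a b ↔ f a + g a < f b + g b := by
  have compat : ∀ a b, f a < f b → g a ≤ g b := fun a b hf => by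
    by_contra! hg
    exact hirr a (.tail (.single (.inl ((hr a b).2 hf))) (.inr ((hs b a).2 hg)))
  have step : ∀ a b, r a b ∨ s a b → f a + g a < f b + g b := by
    intro a b h
    rw [hr, hs] at h
    have hab := compat a b
    have hba := compat b a
    omega
  constructor
  · intro h
    induction h with
    | single h => exact step _ _ h
    | tail _ h ih => exact ih.trans (step _ _ h)
  · intro h
    refine .single ?_
    rw [hr, hs]
    omega

/-- If `r₁` and `r₂` are semi-linear strict partial orders on a finite
set `A`, and their union `r₁ ∪̄ r₂` is irreflexive, then `r₁ ∪̄ r₂` is a semi-linear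
strict partial order. -/
theorem stmt0 {A : Type*} [Fintype A] (r₁ r₂ : A → A → Prop)
    (h₁ : StrictPO r₁) (h₂ : StrictPO r₂)
    (hs₁ : SemiLinear r₁) (hs₂ : SemiLinear r₂)
    (hirr : ∀ a, ¬ relUnion r₁ r₂ a a) :
    StrictPO (relUnion r₁ r₂) ∧ SemiLinear (relUnion r₁ r₂) := by
  obtain ⟨l, f, -, hf⟩ := hs₁
  obtain ⟨m, g, -, hg⟩ := hs₂
  exact ⟨⟨hirr, fun _ _ _ => Relation.TransGen.trans⟩,
    .of_lt_iff (fun a => (f a : ℕ) + (g a : ℕ)) (relUnion_iff_add_lt_add hf hg hirr)⟩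
end

section
/- The symmetric group Σ_A acts freely on the set of double orders on a finite set A: if <* is a double order on A and σ is a permutation of A with <*σ = <*, then σ is the identity. -/
variable {A : Type*}

/-- The converse of a strict partial order is a strict partial order. -/
lemma StrictPO.swap {A : Type*} {r : A → A → Prop} (hr : StrictPO r) :
    StrictPO (Function.swap r) :=
  ⟨hr.1, fun a b c hab hbc => hr.2 c b a hbc hab⟩

/-- A permutation of a finite set preserving a strict partial order moves no element up. -/
lemma StrictPO.not_rel_perm_apply {A : Type*} [Finite A] {r : A → A → Prop} (hr : StrictPO r)
    {σ : Equiv.Perm A} (hσ : ∀ a b, r a b → r (σ a) (σ b)) (a : A) : ¬ r a (σ a) := by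
  intro h
  have key : ∀ n : ℕ, r a ((σ ^ (n + 1)) a) := by
    intro n
    induction n with
    | zero => simpa using h
    | succ n ih =>
      rw [pow_succ', Equiv.Perm.mul_apply]
      exact hr.2 _ _ _ h (hσ _ _ ih)
  have hlast := key (orderOf σ - 1)
  rw [Nat.sub_add_cancel (orderOf_pos σ), pow_orderOf_eq_one] at hlast
  exact hr.1 a hlast

/-- The symmetric group acts freely on double orders on a finite set:
if `<*σ = <*` then `σ` is the identity. -/
theorem stmt2 {A : Type*} [Fintype A] (x y : A → A → Prop)
    (hd : IsDoubleOrder x y) (σ : Equiv.Perm A)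
    (hx : permRel σ x = x) (hy : permRel σ y = y) :
    σ = 1 := by
  obtain ⟨hpx, hpy, hcomp⟩ := hd
  have hσx : ∀ a b, x a b → x (σ a) (σ b) := fun a b => (congrFun₂ hx a b).mpr
  have hσy : ∀ a b, y a b → y (σ a) (σ b) := fun a b => (congrFun₂ hy a b).mpr
  ext a
  by_contra hne
  rcases hcomp a (σ a) (Ne.symm hne) with h | h | h | h
  · exact hpx.not_rel_perm_apply hσx a h
  · exact hpx.swap.not_rel_perm_apply (fun b c => hσx c b) a h
  · exact hpy.not_rel_perm_apply hσy a h
  · exact hpy.swap.not_rel_perm_apply (fun b c => hσy c b) a h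
end

section
/- If <* = (x<, y<) is a semi-regular double order on a finite set A, then (x<, y< ∖ x<) is a regular double order on A. In particular y< ∖ x< is a transitive irreflexive relation, x< is semi-linear, and a x< b implies that a and b are (y< ∖ x<)-incomparable. -/
variable {A : Type*}

/-- A negatively transitive strict partial order on a finite type is semi-linear. -/
theorem StrictPO.semiLinear {A : Type*} [Fintype A] {r : A → A → Prop} (hr : StrictPO r)
    (hneg : ∀ a b c, r a c → r a b ∨ r b c) : SemiLinear r := by
  classical
  obtain ⟨irr, tr⟩ := hr
  let f : A → ℕ := fun a => (Finset.univ.filter fun c => r c a).card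
  have hlt : ∀ a b, r a b → f a < f b := fun a b hab => by
    refine Finset.card_lt_card (Finset.ssubset_iff_subset_ne.2 ⟨fun c hc => ?_, fun he => ?_⟩)
    · simp only [Finset.mem_filter, Finset.mem_univ, true_and] at hc ⊢
      exact tr c a b hc hab
    · have ha : a ∈ Finset.univ.filter fun c => r c b := by simpa using hab
      rw [← he] at ha
      exact irr a (by simpa using ha)
  have hf : ∀ a b, r a b ↔ f a < f b := fun a b => by
    refine ⟨hlt a b, fun h => ?_⟩
    by_contra hab
    refine h.not_ge (Finset.card_le_card fun c hc => ?_)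
    simp only [Finset.mem_filter, Finset.mem_univ, true_and] at hc ⊢
    exact (hneg c a b hc).resolve_right hab
  let e := (Finset.univ.image f).orderIsoOfFin rfl
  have hmem : ∀ a, f a ∈ Finset.univ.image f := fun a =>
    Finset.mem_image_of_mem f (Finset.mem_univ a)
  refine ⟨_, fun a => e.symm ⟨f a, hmem a⟩, fun i => ?_, fun a b => ?_⟩
  · obtain ⟨a, -, ha⟩ := Finset.mem_image.1 (e i).2
    exact ⟨a, (e.symm_apply_eq).2 (Subtype.ext ha)⟩
  · rw [hf, e.symm.lt_iff_lt, Subtype.mk_lt_mk]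

/-- Negative transitivity passes to transitive closures. -/
theorem transGen_negTrans {A : Type*} {s : A → A → Prop}
    (hs : ∀ a b c, s a c → s a b ∨ s b c) (a b c : A) (hac : Relation.TransGen s a c) :
    Relation.TransGen s a b ∨ Relation.TransGen s b c := by
  induction hac with
  | single h => exact (hs _ b _ h).imp .single .single
  | tail _ h ih => exact ih.imp id fun hb => hb.tail h

/-- If `(x, y)` is a semi-regular double order on a finite set `A`,
then `(x, y ∖ x)` is a regular double order on `A` (in particular `y ∖ x` is a
strict partial order, `x` is semi-linear, and `x`-comparable elements are
`(y ∖ x)`-incomparable). -/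
theorem stmt4 {A : Type*} [Fintype A] (x y : A → A → Prop)
    (h : IsSemiRegular x y) :
    IsRegularDO x (dminus y x) := by
  obtain ⟨xirr, yirr, k, hk, xs, ys, hreg, hx, hy⟩ := h
  have xtr : ∀ a b c, x a b → x b c → x a c := fun a b c hab hbc =>
    (hx a c).2 (((hx a b).1 hab).trans ((hx b c).1 hbc))
  have ytr : ∀ a b c, y a b → y b c → y a c := fun a b c hab hbc =>
    (hy a c).2 (((hy a b).1 hab).trans ((hy b c).1 hbc))
  have xneg : ∀ a b c, x a c → x a b ∨ x b c := by
    intro a b c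
    rw [hx, hx, hx]
    refine transGen_negTrans (fun a b c => ?_) a b c
    rintro ⟨i, hi⟩
    obtain ⟨-, ⟨l, f, -, hf⟩, -⟩ := hreg i
    exact (lt_or_ge (f a) (f b)).imp (fun h => ⟨i, (hf a b).2 h⟩)
      fun h => ⟨i, (hf b c).2 (h.trans_lt ((hf a c).1 hi))⟩
  have hcmp : ∀ a b, a ≠ b → x a b ∨ x b a ∨ y a b ∨ y b a := fun a b hab => by
    have hxs : ∀ u v, xs ⟨0, hk⟩ u v → x u v := fun u v h => (hx u v).2 (.single ⟨_, h⟩)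
    have hys : ∀ u v, ys ⟨0, hk⟩ u v → y u v := fun u v h => (hy u v).2 (.single ⟨_, h⟩)
    exact ((hreg ⟨0, hk⟩).1.2.2 a b hab).imp (hxs a b)
      (Or.imp (hxs b a) (Or.imp (hys a b) (hys b a)))
  refine ⟨⟨⟨xirr, xtr⟩, ⟨fun a h => yirr a h.1, ?_⟩, fun a b hab => ?_⟩,
    StrictPO.semiLinear ⟨xirr, xtr⟩ xneg, fun a b hab => ⟨fun h => h.2.1 hab, fun h => h.2.2 hab⟩⟩
  · rintro a b c ⟨hab, hab₁, hab₂⟩ ⟨hbc, hbc₁, hbc₂⟩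
    exact ⟨ytr a b c hab hbc, fun h => (xneg a b c h).elim hab₁ hbc₁,
      fun h => (xneg c b a h).elim hbc₂ hab₂⟩
  · have := hcmp a b hab
    unfold dminus
    tauto
end

section
/- Let <*₁ = (x<₁, y<₁) and <*₂ = (x<₂, y<₂) be double orders on a finite set A with x<₁ ⊆ x<₂ and y<₁ ⊆ y<₂. Then (a) y<₂ ∖ x<₂ = y<₁ ∖ x<₂ and y<₁ ∖ x<₂ ⊆ y<₁ ∖ x<₁; (b) consequently x<₁ ⊆ x<₂ and y<₂ ∖ x<₂ ⊆ y<₁ ∖ x<₁. -/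
variable {A : Type*}

/-- For double orders `(x₁,y₁) ⊆ (x₂,y₂)` componentwise,
(a) `y₂ ∖ x₂ = y₁ ∖ x₂` and `y₁ ∖ x₂ ⊆ y₁ ∖ x₁`;
(b) consequently `x₁ ⊆ x₂` and `y₂ ∖ x₂ ⊆ y₁ ∖ x₁`. -/
theorem stmt5 {A : Type*} [Fintype A] (x₁ y₁ x₂ y₂ : A → A → Prop)
    (h₁ : IsDoubleOrder x₁ y₁) (h₂ : IsDoubleOrder x₂ y₂)
    (hx : ∀ a b, x₁ a b → x₂ a b) (hy : ∀ a b, y₁ a b → y₂ a b) :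
    (∀ a b, dminus y₂ x₂ a b ↔ dminus y₁ x₂ a b) ∧
    (∀ a b, dminus y₁ x₂ a b → dminus y₁ x₁ a b) ∧
    ((∀ a b, x₁ a b → x₂ a b) ∧ (∀ a b, dminus y₂ x₂ a b → dminus y₁ x₁ a b)) := by
  have shrink_y : ∀ a b, dminus y₂ x₂ a b → dminus y₁ x₂ a b := by
    rintro a b ⟨hab, hnab, hnba⟩
    have hne : a ≠ b := by
      rintro rfl
      exact h₂.2.1.1 a hab
    refine ⟨?_, hnab, hnba⟩
    rcases h₁.2.2 a b hne with h | h | h | h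
    · exact absurd (hx a b h) hnab
    · exact absurd (hx b a h) hnba
    · exact h
    · exact absurd (h₂.2.1.2 a b a hab (hy b a h)) (h₂.2.1.1 a)
  have shrink_x : ∀ a b, dminus y₁ x₂ a b → dminus y₁ x₁ a b :=
    fun a b ⟨hab, hnab, hnba⟩ => ⟨hab, fun h => hnab (hx a b h), fun h => hnba (hx b a h)⟩
  exact ⟨fun a b => ⟨shrink_y a b, fun ⟨hab, hn⟩ => ⟨hy a b hab, hn⟩⟩, shrink_x, hx,
    fun a b h => shrink_x a b (shrink_y a b h)⟩
end

section
/- Let <*₁ = (x<₁, y<₁) and <*₂ = (x<₂, y<₂) be regular double orders on a finite set A with x<₁ ⊆ x<₂ and y<₂ ⊆ y<₁. Then the pair (x<₂, y<₁) is a semi-regular double order on A, and y<₁ ∖ x<₂ = y<₂ (that is, for all a, b ∈ A: a y<₁ b together with a and b being x<₂-incomparable holds iff a y<₂ b). -/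
variable {A : Type*}

/-- A transitive relation `r` equivalent to `s` is the transitive closure of `s`. -/
theorem transGen_iff_of_transitive {A : Type*} {r s : A → A → Prop}
    (htrans : ∀ a b c, r a b → r b c → r a c) (hrs : ∀ a b, r a b → s a b)
    (hsr : ∀ a b, s a b → r a b) (a b : A) : r a b ↔ Relation.TransGen s a b := by
  refine ⟨fun h => .single (hrs a b h), fun h => ?_⟩
  induction h with
  | single h => exact hsr _ _ h
  | tail _ h ih => exact htrans _ _ _ ih (hsr _ _ h)

/-- If `(x₁,y₁)` and `(x₂,y₂)` are regular double orders on a finite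
set with `x₁ ⊆ x₂` and `y₂ ⊆ y₁`, then `(x₂, y₁)` is a semi-regular double order
and `y₁ ∖ x₂ = y₂`. -/
theorem stmt6 {A : Type*} [Fintype A] (x₁ y₁ x₂ y₂ : A → A → Prop)
    (h₁ : IsRegularDO x₁ y₁) (h₂ : IsRegularDO x₂ y₂)
    (hx : ∀ a b, x₁ a b → x₂ a b) (hy : ∀ a b, y₂ a b → y₁ a b) :
    IsSemiRegular x₂ y₁ ∧ (∀ a b, dminus y₁ x₂ a b ↔ y₂ a b) := by
  obtain ⟨⟨-, hy₁, -⟩, -, -⟩ := id h₁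
  obtain ⟨⟨hx₂, -, hcomp⟩, -, hinc⟩ := id h₂
  refine ⟨⟨hx₂.1, hy₁.1, 2, two_pos, ![x₁, x₂], ![y₁, y₂], ?_, ?_, ?_⟩, fun a b => ⟨?_, ?_⟩⟩
  · simpa [Fin.forall_fin_two] using ⟨h₁, h₂⟩
  · refine transGen_iff_of_transitive hx₂.2 (fun a b h => ⟨1, h⟩) ?_
    simpa [Fin.exists_fin_two] using fun a b h => Or.elim h (hx a b) id
  · refine transGen_iff_of_transitive hy₁.2 (fun a b h => ⟨0, h⟩) ?_
    simpa [Fin.exists_fin_two] using fun a b h => Or.elim h id (hy a b)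
  · rintro ⟨hab, hx_ab, hx_ba⟩
    have hne : a ≠ b := by
      rintro rfl
      exact hy₁.1 a hab
    rcases hcomp a b hne with h | h | h | h
    · exact absurd h hx_ab
    · exact absurd h hx_ba
    · exact h
    · exact absurd (hy₁.2 a b a hab (hy b a h)) (hy₁.1 a)
  · intro h
    exact ⟨hy a b h, fun hab => (hinc a b hab).1 h, fun hba => (hinc b a hba).2 h⟩
end

section
/- For every double order <* on a finite set A, the set U(<*) is a nonempty, open, and convex subset of the space of functions A → ℝ², and every f ∈ U(<*) is injective (so U(<*) is contained in the ordered configuration space OConf(A, ℝ²) of injective maps A → ℝ²). -/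
variable {A : Type*}

/-- A strict partial order on a finite set admits a strictly monotone real-valued function,
namely the number of predecessors. -/
theorem StrictPO.exists_strictMono [Finite A] {r : A → A → Prop} (hr : StrictPO r) :
    ∃ h : A → ℝ, ∀ a b, r a b → h a < h b := by
  refine ⟨fun a => ({c | r c a}.ncard : ℝ), fun a b hab => ?_⟩
  refine Nat.cast_lt.2 (Set.ncard_lt_ncard ?_ (Set.toFinite _))
  exact ⟨fun c hc => hr.2 c a b hc hab, fun h => hr.1 a (h hab)⟩

theorem USet_eq_iInter (x y : A → A → Prop) :
    USet x y = ⋂ a, ⋂ b, (⋂ _ : x a b, {f : A → ℝ × ℝ | (f a).1 < (f b).1}) ∩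
      ⋂ _ : y a b, {f : A → ℝ × ℝ | (f a).2 < (f b).2} := by
  ext f
  simp [USet]

theorem USet_nonempty [Finite A] {x y : A → A → Prop} (hx : StrictPO x) (hy : StrictPO y) :
    (USet x y).Nonempty := by
  obtain ⟨g, hg⟩ := hx.exists_strictMono
  obtain ⟨h, hh⟩ := hy.exists_strictMono
  exact ⟨fun a => (g a, h a), fun a b => ⟨hg a b, hh a b⟩⟩

theorem isOpen_USet [Finite A] (x y : A → A → Prop) : IsOpen (USet x y) := by
  rw [USet_eq_iInter]
  refine isOpen_iInter_of_finite fun a => isOpen_iInter_of_finite fun b => IsOpen.inter ?_ ?_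
  · exact isOpen_iInter_of_finite fun _ => isOpen_lt (by fun_prop) (by fun_prop)
  · exact isOpen_iInter_of_finite fun _ => isOpen_lt (by fun_prop) (by fun_prop)

theorem convex_USet (x y : A → A → Prop) : Convex ℝ (USet x y) := by
  refine convex_iff_forall_pos.2 fun f hf g hg s t hs ht _ a b => ⟨fun h => ?_, fun h => ?_⟩
  · have hfab := (hf a b).1 h
    have hgab := (hg a b).1 h
    simp only [Pi.add_apply, Pi.smul_apply, Prod.fst_add, Prod.smul_fst, smul_eq_mul]
    gcongr
  · have hfab := (hf a b).2 h
    have hgab := (hg a b).2 h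
    simp only [Pi.add_apply, Pi.smul_apply, Prod.snd_add, Prod.smul_snd, smul_eq_mul]
    gcongr

theorem IsDoubleOrder.injective_of_mem_USet {x y : A → A → Prop} (hd : IsDoubleOrder x y)
    {f : A → ℝ × ℝ} (hf : f ∈ USet x y) : Function.Injective f := by
  intro a b hab
  by_contra hne
  rcases hd.2.2 a b hne with h | h | h | h
  · exact ((hf a b).1 h).ne (congrArg Prod.fst hab)
  · exact ((hf b a).1 h).ne' (congrArg Prod.fst hab)
  · exact ((hf a b).2 h).ne (congrArg Prod.snd hab)
  · exact ((hf b a).2 h).ne' (congrArg Prod.snd hab)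

/-- For every double order `(x,y)` on a finite set `A`, the set
`U(<*)` is a nonempty, open, convex subset of the space of functions `A → ℝ²`,
and every `f ∈ U(<*)` is injective (so `U(<*) ⊆ OConf(A, ℝ²)`). -/
theorem stmt7 {A : Type*} [Fintype A] (x y : A → A → Prop)
    (hd : IsDoubleOrder x y) :
    (USet x y).Nonempty ∧ IsOpen (USet x y) ∧ Convex ℝ (USet x y) ∧
      ∀ f ∈ USet x y, Function.Injective f := by
  exact ⟨USet_nonempty hd.1 hd.2.1, isOpen_USet x y, convex_USet x y,
    fun _ hf => hd.injective_of_mem_USet hf⟩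
end

section
/- Let <*₁, …, <*_k (k ≥ 1) be double orders on a finite set A, and let x< and y< be the transitive closures of ⋃ᵢ x<ᵢ and ⋃ᵢ y<ᵢ respectively. If both x< and y< are irreflexive, then (x<, y<) is a double order and ⋂ᵢ U(<*ᵢ) = U((x<, y<)); otherwise ⋂ᵢ U(<*ᵢ) = ∅. -/
variable {A : Type*}

/-- A function that is strictly increasing along a relation is strictly increasing along its
transitive closure. -/
theorem lt_of_transGen {B α : Type*} [Preorder α] {r : B → B → Prop} {g : B → α}
    (h : ∀ a b, r a b → g a < g b) {a b : B} (hab : Relation.TransGen r a b) : g a < g b := by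
  induction hab with
  | single h₁ => exact h _ _ h₁
  | tail _ h₂ ih => exact ih.trans (h _ _ h₂)

/-- The transitive closure of a relation is a strict partial order once it is irreflexive. -/
theorem strictPO_transGen {B : Type*} {r : B → B → Prop}
    (h : ∀ a, ¬ Relation.TransGen r a a) : StrictPO (Relation.TransGen r) :=
  ⟨h, fun _ _ _ => Relation.TransGen.trans⟩

theorem iInter_USet_eq {B ι : Type*} (xs ys : ι → B → B → Prop) :
    (⋂ i, USet (xs i) (ys i)) =
      USet (Relation.TransGen (fun u v => ∃ i, xs i u v))
        (Relation.TransGen (fun u v => ∃ i, ys i u v)) := by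
  ext f
  rw [Set.mem_iInter]
  constructor
  · intro hf a b
    exact ⟨lt_of_transGen (g := fun a => (f a).1) fun a b ⟨i, hi⟩ => (hf i a b).1 hi,
      lt_of_transGen (g := fun a => (f a).2) fun a b ⟨i, hi⟩ => (hf i a b).2 hi⟩
  · intro hf i a b
    exact ⟨fun h => (hf a b).1 (.single ⟨i, h⟩), fun h => (hf a b).2 (.single ⟨i, h⟩)⟩

/-- If `USet x y` is nonempty, then `x` and `y` are irreflexive. -/
theorem irrefl_of_mem_USet {B : Type*} {x y : B → B → Prop} {f : B → ℝ × ℝ}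
    (hf : f ∈ USet x y) : (∀ a, ¬ x a a) ∧ (∀ a, ¬ y a a) :=
  ⟨fun a h => lt_irrefl _ ((hf a a).1 h), fun a h => lt_irrefl _ ((hf a a).2 h)⟩

/-- Let `<*₁,…,<*_k` (`k ≥ 1`) be double orders on a finite set `A`
and let `x`, `y` be the transitive closures of the unions of their components.
If both `x` and `y` are irreflexive then `(x,y)` is a double order and
`⋂ᵢ U(<*ᵢ) = U((x,y))`; otherwise `⋂ᵢ U(<*ᵢ) = ∅`. -/
theorem stmt8 {A : Type*} [Fintype A] (k : ℕ) (hk : 0 < k)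
    (xs ys : Fin k → (A → A → Prop))
    (hdo : ∀ i, IsDoubleOrder (xs i) (ys i)) :
    ((∀ a, ¬ Relation.TransGen (fun u v => ∃ i, xs i u v) a a) ∧
     (∀ a, ¬ Relation.TransGen (fun u v => ∃ i, ys i u v) a a) →
      IsDoubleOrder (Relation.TransGen (fun u v => ∃ i, xs i u v))
        (Relation.TransGen (fun u v => ∃ i, ys i u v)) ∧
      (⋂ i, USet (xs i) (ys i)) =
        USet (Relation.TransGen (fun u v => ∃ i, xs i u v))
          (Relation.TransGen (fun u v => ∃ i, ys i u v))) ∧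
    (¬ ((∀ a, ¬ Relation.TransGen (fun u v => ∃ i, xs i u v) a a) ∧
        (∀ a, ¬ Relation.TransGen (fun u v => ∃ i, ys i u v) a a)) →
      (⋂ i, USet (xs i) (ys i)) = ∅) := by
  refine ⟨fun ⟨hx, hy⟩ => ⟨⟨strictPO_transGen hx, strictPO_transGen hy, fun a b hab => ?_⟩,
    iInter_USet_eq xs ys⟩, fun hirr => ?_⟩
  · let i : Fin k := ⟨0, hk⟩
    exact ((hdo i).2.2 a b hab).imp (fun h => .single ⟨i, h⟩) <|
      Or.imp (fun h => .single ⟨i, h⟩) <|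
        Or.imp (fun h => .single ⟨i, h⟩) (fun h => .single ⟨i, h⟩)
  · rw [iInter_USet_eq]
    exact Set.eq_empty_of_forall_notMem fun f hf => hirr (irrefl_of_mem_USet hf)
end

section
/- Let A be a finite set and f = (f_x, f_y) : A → ℝ² an injective function. Define relations on A by: a x<_f b iff f_x(a) < f_x(b), and a y<_f b iff f_x(a) = f_x(b) and f_y(a) < f_y(b). Then (x<_f, y<_f) is a regular double order on A and f ∈ U((x<_f, y<_f)). In particular, the sets U(<*), for <* ranging over regular double orders on A, cover the ordered configuration space of injective maps A → ℝ². -/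
variable {A : Type*}

/-- The strict order pulled back along a map from a finite type to a linear order is
semi-linear. -/
theorem semiLinear_of_map {α β : Type*} [Finite α] [LinearOrder β] (g : α → β) :
    SemiLinear (fun a b => g a < g b) := by
  have := Fintype.ofFinite (Set.range g)
  let e : Set.range g ≃o Fin (Fintype.card (Set.range g)) :=
    (Fintype.orderIsoFinOfCardEq (Set.range g) rfl).symm
  exact ⟨_, e ∘ Set.rangeFactorization g,
    e.surjective.comp Set.rangeFactorization_surjective, fun a b =>
      (e.lt_iff_lt (x := Set.rangeFactorization g a) (y := Set.rangeFactorization g b)).symm⟩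

/-- For an injective `f = (f_x,f_y) : A → ℝ²` on a finite set `A`,
the relations `a x<_f b ↔ f_x a < f_x b` and
`a y<_f b ↔ (f_x a = f_x b ∧ f_y a < f_y b)` form a regular double order, and
`f ∈ U((x<_f, y<_f))`; in particular the sets `U(<*)`, for `<*` regular, cover
the ordered configuration space of injective maps `A → ℝ²`. -/
theorem stmt10 {A : Type*} [Fintype A] (f : A → ℝ × ℝ)
    (hf : Function.Injective f) :
    IsRegularDO (fun a b => (f a).1 < (f b).1)
        (fun a b => (f a).1 = (f b).1 ∧ (f a).2 < (f b).2) ∧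
      f ∈ USet (fun a b => (f a).1 < (f b).1)
        (fun a b => (f a).1 = (f b).1 ∧ (f a).2 < (f b).2) := by
  refine ⟨⟨⟨⟨fun a => lt_irrefl _, fun a b c => lt_trans⟩,
    ⟨fun a h => lt_irrefl _ h.2, fun a b c h k => ⟨h.1.trans k.1, h.2.trans k.2⟩⟩, ?_⟩,
    semiLinear_of_map fun a => (f a).1,
    fun a b h => ⟨fun k => h.ne k.1, fun k => h.ne' k.1⟩⟩,
    fun a b => ⟨id, And.right⟩⟩
  intro a b hab
  rcases lt_trichotomy (f a).1 (f b).1 with h | h | h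
  · exact Or.inl h
  · rcases lt_trichotomy (f a).2 (f b).2 with k | k | k
    · exact Or.inr (Or.inr (Or.inl ⟨h, k⟩))
    · exact absurd (hf (Prod.ext h k)) hab
    · exact Or.inr (Or.inr (Or.inr ⟨h.symm, k⟩))
  · exact Or.inr (Or.inl h)
end

section
/- Let <* be a semi-regular double order on a finite set A and let σ be a permutation of A that is not the identity. Then U(<*) ∩ U(<*σ) = ∅. (The cover of the configuration space by the sets U(<*), <* semi-regular, is a proper Σ_A-equivariant cover.) -/
variable {A : Type*}

/-- If the permutation `σ` of a finite set never inverts the levels of `h`, then it does not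
raise any level. -/
theorem apply_perm_le_of_forall_not_inversion {A L : Type*} [Finite A] [LinearOrder L]
    (h : A → L) (σ : Equiv.Perm A)
    (hinv : ∀ a b, h a < h b → ¬ h (σ b) < h (σ a)) (a : A) : h (σ a) ≤ h a := by
  by_contra! hlt
  have hmaps : ∀ c, h c ≤ h a → h (σ.symm c) ≤ h a := by
    intro c hc
    by_contra! hac
    exact hinv a (σ.symm c) hac (by simpa using hc.trans_lt hlt)
  have := Equiv.Perm.perm_symm_on_of_perm_on_finite (p := fun c => h c ≤ h a) hmaps le_rfl
  rw [Equiv.symm_symm] at this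
  exact this.not_gt hlt

/-- A permutation of a finite set that never inverts the levels of `h` preserves the levels. -/
theorem apply_perm_eq_of_forall_not_inversion {A L : Type*} [Finite A] [LinearOrder L]
    (h : A → L) (σ : Equiv.Perm A)
    (hinv : ∀ a b, h a < h b → ¬ h (σ b) < h (σ a)) (a : A) : h (σ a) = h a := by
  refine (apply_perm_le_of_forall_not_inversion h σ hinv a).antisymm ?_
  have hinv' : ∀ b c, h b < h c → ¬ h (σ.symm c) < h (σ.symm b) := fun b c hbc hcb =>
    hinv _ _ hcb (by simpa using hbc)
  simpa using apply_perm_le_of_forall_not_inversion h σ.symm hinv' (σ a)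

/-- For a regular double order `<*`, a permutation `σ` for which `U(<*)` meets `U(<*σ)` is the
identity. -/
theorem IsRegularDO.perm_eq_one {A : Type*} [Finite A] {x y : A → A → Prop}
    (hreg : IsRegularDO x y) {σ : Equiv.Perm A} {f : A → ℝ × ℝ} (hf : f ∈ USet x y)
    (hfσ : f ∈ USet (permRel σ x) (permRel σ y)) : σ = 1 := by
  obtain ⟨⟨-, -, htot⟩, ⟨l, h, -, hx⟩, -⟩ := hreg
  have hlevel : ∀ a, h (σ a) = h a := apply_perm_eq_of_forall_not_inversion h σ
    fun a b hab hba => ((hf a b).1 ((hx a b).2 hab)).asymm ((hfσ b a).1 ((hx _ _).2 hba))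
  by_contra hσ
  have hne : {a | σ a ≠ a}.Nonempty := by
    by_contra hempty
    rw [Set.not_nonempty_iff_eq_empty, Set.eq_empty_iff_forall_notMem] at hempty
    exact hσ (Equiv.ext fun a => not_not.1 (hempty a))
  -- A moved point at which the second coordinate is maximal.
  obtain ⟨a, ha, hmax⟩ :=
    Set.exists_max_image {a | σ a ≠ a} (fun a => (f a).2) (Set.toFinite _) hne
  rcases htot a (σ a) (Ne.symm ha) with hlt | hlt | hlt | hlt
  · exact ((hx _ _).1 hlt).ne (hlevel a).symm
  · exact ((hx _ _).1 hlt).ne (hlevel a)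
  · exact (hmax (σ a) fun e => ha (σ.injective e)).not_gt ((hf _ _).2 hlt)
  · refine (hmax (σ.symm a) fun e => ha ?_).not_gt ((hfσ a (σ.symm a)).2 ?_)
    · rw [Equiv.apply_symm_apply] at e
      exact (Equiv.eq_symm_apply σ).1 e
    · simpa [permRel] using hlt

/-- If `<*` is a semi-regular double order on a finite set `A` and
`σ` is a non-identity permutation of `A`, then `U(<*) ∩ U(<*σ) = ∅`. -/
theorem stmt11 {A : Type*} [Fintype A] (x y : A → A → Prop)
    (h : IsSemiRegular x y) (σ : Equiv.Perm A) (hσ : σ ≠ 1) :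
    USet x y ∩ USet (permRel σ x) (permRel σ y) = ∅ := by
  obtain ⟨-, -, k, hk, xs, ys, hreg, hx, hy⟩ := h
  have hxs : ∀ a b, xs ⟨0, hk⟩ a b → x a b := fun a b hab => (hx a b).2 (.single ⟨_, hab⟩)
  have hys : ∀ a b, ys ⟨0, hk⟩ a b → y a b := fun a b hab => (hy a b).2 (.single ⟨_, hab⟩)
  rw [Set.eq_empty_iff_forall_notMem]
  rintro f ⟨hf, hfσ⟩
  exact hσ <| (hreg ⟨0, hk⟩).perm_eq_one (f := f)
    (fun a b => ⟨fun hab => (hf a b).1 (hxs _ _ hab), fun hab => (hf a b).2 (hys _ _ hab)⟩)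
    (fun a b => ⟨fun hab => (hfσ a b).1 (hxs _ _ hab), fun hab => (hfσ a b).2 (hys _ _ hab)⟩)
end

section
/- Let <*₁ = (x<₁, y<₁) and <*₂ = (x<₂, y<₂) be semi-regular double orders on a finite set A. Then U(<*₁) ⊆ U(<*₂) if and only if x<₂ ⊆ x<₁ and y<₂ ⊆ y<₁ (i.e., <*₁ ⊇ <*₂ componentwise). -/
variable {A : Type*}

/-- If `r` does not relate `a` to `b`, some real-valued `r`-strictly monotone function
does not separate `a` strictly below `b`. -/
theorem StrictPO.exists_real_strictMono_le {A : Type*} [Fintype A] {r : A → A → Prop}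
    (hr : StrictPO r) {a b : A} (hab : ¬ r a b) :
    ∃ f : A → ℝ, (∀ c d, r c d → f c < f d) ∧ f b ≤ f a := by
  classical
  obtain ⟨irrefl, trans⟩ := hr
  let g : A → ℕ := fun c => (Finset.univ.filter fun d => r d c).card
  have hg : ∀ c d, r c d → g c < g d := fun c d hcd => by
    apply Finset.card_lt_card
    rw [Finset.ssubset_iff_of_subset]
    · exact ⟨c, by simpa using hcd, by simpa using irrefl c⟩
    · intro e he
      simp only [Finset.mem_filter, Finset.mem_univ, true_and] at he ⊢
      exact trans _ _ _ he hcd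
  have hg_le : ∀ c, g c ≤ Fintype.card A := fun c => Finset.card_le_univ _
  let f : A → ℕ := fun c => g c + if c = a ∨ r a c then Fintype.card A else 0
  refine ⟨fun c => f c, fun c d hcd => ?_, ?_⟩
  · have hup : c = a ∨ r a c → d = a ∨ r a d := by
      rintro (rfl | h)
      · exact Or.inr hcd
      · exact Or.inr (trans _ _ _ h hcd)
    have := hg c d hcd
    have hf : f c < f d := by
      simp only [f]
      split_ifs with h h' <;> first | omega | exact absurd (hup h) h'
    exact Nat.cast_lt.mpr hf
  · have hf : f b ≤ f a := by
      by_cases hba : b = a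
      · rw [hba]
      · have := hg_le b
        simp only [f, hba, hab, true_or, or_self, if_true, if_false]
        omega
    exact Nat.cast_le.mpr hf

theorem IsSemiRegular.strictPO {A : Type*} {x y : A → A → Prop} (h : IsSemiRegular x y) :
    StrictPO x ∧ StrictPO y := by
  obtain ⟨hx, hy, _, _, _, _, _, hxs, hys⟩ := h
  refine ⟨⟨hx, fun a b c hab hbc => ?_⟩, ⟨hy, fun a b c hab hbc => ?_⟩⟩
  · rw [hxs] at *
    exact hab.trans hbc
  · rw [hys] at *
    exact hab.trans hbc

/-- For semi-regular double orders `<*₁ = (x₁,y₁)` and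
`<*₂ = (x₂,y₂)` on a finite set `A`, one has `U(<*₁) ⊆ U(<*₂)` iff
`x₂ ⊆ x₁` and `y₂ ⊆ y₁` (i.e. `<*₁ ⊇ <*₂` componentwise). -/
theorem stmt12 {A : Type*} [Fintype A] (x₁ y₁ x₂ y₂ : A → A → Prop)
    (h₁ : IsSemiRegular x₁ y₁) (h₂ : IsSemiRegular x₂ y₂) :
    USet x₁ y₁ ⊆ USet x₂ y₂ ↔
      ((∀ a b, x₂ a b → x₁ a b) ∧ (∀ a b, y₂ a b → y₁ a b)) := by
  obtain ⟨hx, hy⟩ := h₁.strictPO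
  constructor
  · intro hU
    constructor
    · intro a b hab
      by_contra hn
      obtain ⟨f, hf, hba⟩ := hx.exists_real_strictMono_le hn
      obtain ⟨g, hg, -⟩ := hy.exists_real_strictMono_le (hy.1 a)
      have hfg : (fun c => (f c, g c)) ∈ USet x₁ y₁ := fun c d => ⟨hf c d, hg c d⟩
      exact not_lt_of_ge hba ((hU hfg a b).1 hab)
    · intro a b hab
      by_contra hn
      obtain ⟨f, hf, -⟩ := hx.exists_real_strictMono_le (hx.1 a)
      obtain ⟨g, hg, hba⟩ := hy.exists_real_strictMono_le hn
      have hfg : (fun c => (f c, g c)) ∈ USet x₁ y₁ := fun c d => ⟨hf c d, hg c d⟩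
      exact not_lt_of_ge hba ((hU hfg a b).2 hab)
  · rintro ⟨hxx, hyy⟩ f hf a b
    exact ⟨fun h => (hf a b).1 (hxx a b h), fun h => (hf a b).2 (hyy a b h)⟩
end

section
/- Let p, q ≥ 0, V ⊆ {1,…,p}, W ⊆ {1,…,q} with p − |V| = q − |W|, and set s = p + |W| = q + |V|. Then there exist subsets V', W' ⊆ {1,…,s} with |V'| = |V| and |W'| = |W| such that δ⁰_{W'} ∘ δ¹_V = δ¹_{V'} ∘ δ⁰_W as maps ℝ^{p−|V|} → ℝ^s. -/
/-- The geometric face/insertion map `δ^ε_V : ℝ^m → ℝ^n` for a subset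
`V ⊆ {1,…,n}` whose complement has `m` elements: the coordinates at positions in
`V` are set to `ε` and the remaining coordinates are filled in, in increasing
order of position, by the coordinates of the argument. -/
def deltaMap {m n : ℕ} (V : Finset (Fin n)) (h : Vᶜ.card = m) (ε : ℝ)
    (x : Fin m → ℝ) : Fin n → ℝ :=
  fun i =>
    if hi : i ∈ V then ε
    else x ((Vᶜ.orderIsoOfFin h).symm ⟨i, Finset.mem_compl.mpr hi⟩)

/-- A key for the elements of `Fin p` relative to a suborder `e : Fin m ↪o Fin p`: first the number
of elements of the suborder which are at most `i`, then `0` on the suborder and a positive value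
shifted by `c` off the suborder. -/
def amalgamKey {m p : ℕ} (e : Fin m ↪o Fin p) (c : ℕ) (i : Fin p) : ℕ ×ₗ ℕ :=
  open Classical in
  toLex ((Finset.univ.filter fun k => e k ≤ i).card, if i ∈ Set.range e then 0 else 1 + c + i)

theorem amalgamKey_strictMono {m p : ℕ} (e : Fin m ↪o Fin p) (c : ℕ) :
    StrictMono (amalgamKey e c) := by
  classical
  intro i j hij
  have hsub : (Finset.univ.filter fun k => e k ≤ i) ⊆ Finset.univ.filter fun k => e k ≤ j :=
    Finset.monotone_filter_right _ fun k _ hk => le_trans hk hij.le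
  rw [amalgamKey, amalgamKey, Prod.Lex.toLex_lt_toLex]
  by_cases hj : j ∈ Set.range e
  · obtain ⟨k, rfl⟩ := hj
    left
    refine Finset.card_lt_card (Finset.ssubset_iff_subset_ne.mpr ⟨hsub, fun h => ?_⟩)
    have hk : k ∈ Finset.univ.filter fun l => e l ≤ i := by simp [h]
    exact absurd (Finset.mem_filter.mp hk).2 (not_le.mpr hij)
  · rcases (Finset.card_le_card hsub).lt_or_eq with h | h
    · exact Or.inl h
    · refine Or.inr ⟨h, ?_⟩
      have : (i : ℕ) < j := hij
      simp only [if_neg hj]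
      split_ifs <;> omega

theorem amalgamKey_apply_emb {m p q : ℕ} (e : Fin m ↪o Fin p) (e' : Fin m ↪o Fin q) (c c' : ℕ)
    (k : Fin m) : amalgamKey e c (e k) = amalgamKey e' c' (e' k) := by
  simp [amalgamKey]

theorem mem_range_of_amalgamKey_eq {m p q : ℕ} (e : Fin m ↪o Fin p) (e' : Fin m ↪o Fin q)
    {i : Fin p} {j : Fin q} (h : amalgamKey e 0 i = amalgamKey e' p j) : i ∈ Set.range e := by
  by_contra hi
  have h2 := congrArg (fun z => (ofLex z).2) h
  have := i.isLt
  simp only [amalgamKey, ofLex_toLex, if_neg hi] at h2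
  split_ifs at h2 <;> omega

/-- Amalgamation of finite linear orders over a common suborder. -/
theorem exists_amalgam {m p q s : ℕ} (e : Fin m ↪o Fin p) (e' : Fin m ↪o Fin q)
    (hs : s + m = p + q) :
    ∃ (a : Fin p → Fin s) (b : Fin q → Fin s), StrictMono a ∧ StrictMono b ∧
      (∀ k, a (e k) = b (e' k)) ∧ (∀ i j, a i = b j → i ∈ Set.range e) ∧
      ∀ t, t ∈ Set.range a ∨ t ∈ Set.range b := by
  classical
  set f := amalgamKey e 0
  set g := amalgamKey e' p
  have hf : StrictMono f := amalgamKey_strictMono e 0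
  have hg : StrictMono g := amalgamKey_strictMono e' p
  have hfg : ∀ k, f (e k) = g (e' k) := amalgamKey_apply_emb e e' 0 p
  have hinter : Finset.univ.image f ∩ Finset.univ.image g = Finset.univ.image (f ∘ e) := by
    ext z
    simp only [Finset.mem_inter, Finset.mem_image, Finset.mem_univ, true_and, Function.comp_apply]
    constructor
    · rintro ⟨⟨i, rfl⟩, j, hj⟩
      obtain ⟨k, rfl⟩ := mem_range_of_amalgamKey_eq e e' hj.symm
      exact ⟨k, rfl⟩
    · rintro ⟨k, rfl⟩
      exact ⟨⟨_, rfl⟩, _, (hfg k).symm⟩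
  have hcard : (Finset.univ.image f ∪ Finset.univ.image g).card = s := by
    have h := Finset.card_union_add_card_inter (Finset.univ.image f) (Finset.univ.image g)
    rw [hinter, Finset.card_image_of_injective _ hf.injective,
      Finset.card_image_of_injective _ hg.injective,
      Finset.card_image_of_injective _ (hf.injective.comp e.injective)] at h
    simp only [Finset.card_univ, Fintype.card_fin] at h
    omega
  set σ := Finset.orderIsoOfFin _ hcard
  have hfm : ∀ i, f i ∈ Finset.univ.image f ∪ Finset.univ.image g := fun i => by simp
  have hgm : ∀ j, g j ∈ Finset.univ.image f ∪ Finset.univ.image g := fun j => by simp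
  refine ⟨fun i => σ.symm ⟨f i, hfm i⟩, fun j => σ.symm ⟨g j, hgm j⟩,
    fun i j h => σ.symm.strictMono (hf h), fun i j h => σ.symm.strictMono (hg h),
    fun k => ?_, fun i j h => ?_, fun t => ?_⟩
  · simp only [hfg]
  · exact mem_range_of_amalgamKey_eq e e' (congrArg Subtype.val (σ.symm.injective h))
  · rcases Finset.mem_union.mp (σ t).2 with h | h
    · obtain ⟨i, -, hi⟩ := Finset.mem_image.mp h
      exact Or.inl ⟨i, by simp [hi]⟩
    · obtain ⟨j, -, hj⟩ := Finset.mem_image.mp h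
      exact Or.inr ⟨j, by simp [hj]⟩

theorem deltaMap_of_mem {m n : ℕ} {V : Finset (Fin n)} (h : Vᶜ.card = m) (ε : ℝ)
    (x : Fin m → ℝ) {i : Fin n} (hi : i ∈ V) : deltaMap V h ε x i = ε :=
  dif_pos hi

theorem deltaMap_apply_of_strictMono {m n : ℕ} {V : Finset (Fin n)} (h : Vᶜ.card = m) (ε : ℝ)
    (x : Fin m → ℝ) {a : Fin m → Fin n} (ha : StrictMono a) (haV : ∀ k, a k ∉ V) (k : Fin m) :
    deltaMap V h ε x (a k) = x k := by
  have hu := Finset.orderEmbOfFin_unique h (fun k => Finset.mem_compl.mpr (haV k)) ha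
  rw [deltaMap, dif_neg (haV k)]
  congr 1
  rw [OrderIso.symm_apply_eq]
  ext1
  simp [hu]

/-- Let `p, q ≥ 0`, `V ⊆ {1,…,p}`, `W ⊆ {1,…,q}` with
`p − |V| = q − |W|`, and `s = p + |W| = q + |V|`. Then there exist
`V', W' ⊆ {1,…,s}` with `|V'| = |V|`, `|W'| = |W|` such that
`δ⁰_{W'} ∘ δ¹_V = δ¹_{V'} ∘ δ⁰_W` as maps `ℝ^{p−|V|} → ℝ^s`. -/
theorem stmt13 (p q : ℕ) (V : Finset (Fin p)) (W : Finset (Fin q))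
    (hpq : p - V.card = q - W.card) :
    ∃ (V' W' : Finset (Fin (p + W.card))),
      V'.card = V.card ∧ W'.card = W.card ∧
      ∃ (hV : Vᶜ.card = p - V.card) (hW : Wᶜ.card = p - V.card)
        (hW' : W'ᶜ.card = p) (hV' : V'ᶜ.card = q),
        ∀ x : Fin (p - V.card) → ℝ,
          deltaMap W' hW' 0 (deltaMap V hV 1 x)
            = deltaMap V' hV' 1 (deltaMap W hW 0 x) := by
  classical
  have hVp : V.card ≤ p := by simpa using V.card_le_univ
  have hWq : W.card ≤ q := by simpa using W.card_le_univ
  have hV : Vᶜ.card = p - V.card := by simp [Finset.card_compl]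
  have hW : Wᶜ.card = p - V.card := by simp [Finset.card_compl, hpq]
  set e := Vᶜ.orderEmbOfFin hV with he
  set e' := Wᶜ.orderEmbOfFin hW with he'
  have heV : ∀ k, e k ∉ V := fun k => Finset.mem_compl.mp (Finset.orderEmbOfFin_mem _ hV k)
  have heW : ∀ k, e' k ∉ W := fun k => Finset.mem_compl.mp (Finset.orderEmbOfFin_mem _ hW k)
  have hVe : ∀ i, i ∉ V → ∃ k, e k = i := fun i hi => by
    have : i ∈ Set.range e := by simpa [he, Finset.range_orderEmbOfFin] using hi
    exact this
  have hWe : ∀ j, j ∉ W → ∃ k, e' k = j := fun j hj => by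
    have : j ∈ Set.range e' := by simpa [he', Finset.range_orderEmbOfFin] using hj
    exact this
  obtain ⟨a, b, ha, hb, hab, hrange, hcover⟩ :=
    exists_amalgam (s := p + W.card) e e' (by omega)
  have hca : (Finset.univ.image a).card = p := by
    simp [Finset.card_image_of_injective _ ha.injective]
  have hcb : (Finset.univ.image b).card = q := by
    simp [Finset.card_image_of_injective _ hb.injective]
  have hamem : ∀ i, a i ∉ (Finset.univ.image a)ᶜ := fun i => by simp
  have hbmem : ∀ j, b j ∉ (Finset.univ.image b)ᶜ := fun j => by simp
  refine ⟨(Finset.univ.image b)ᶜ, (Finset.univ.image a)ᶜ, ?_, ?_, hV, hW, by rwa [compl_compl],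
    by rwa [compl_compl], fun x => funext fun t => ?_⟩
  · rw [Finset.card_compl, hcb, Fintype.card_fin]; omega
  · rw [Finset.card_compl, hca, Fintype.card_fin]; omega
  have hcommon : ∀ k, deltaMap (Finset.univ.image a)ᶜ (by rwa [compl_compl]) 0
      (deltaMap V hV 1 x) (a (e k)) = deltaMap (Finset.univ.image b)ᶜ (by rwa [compl_compl]) 1
      (deltaMap W hW 0 x) (a (e k)) := fun k => by
    rw [deltaMap_apply_of_strictMono _ _ _ ha hamem, hab,
      deltaMap_apply_of_strictMono _ _ _ hb hbmem,
      deltaMap_apply_of_strictMono _ _ _ e.strictMono heV,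
      deltaMap_apply_of_strictMono _ _ _ e'.strictMono heW]
  rcases hcover t with ⟨i, rfl⟩ | ⟨j, rfl⟩
  · by_cases hi : i ∈ V
    · have hmem : a i ∈ (Finset.univ.image b)ᶜ := by
        simp only [Finset.mem_compl, Finset.mem_image, Finset.mem_univ, true_and]
        rintro ⟨j, hj⟩
        obtain ⟨k, rfl⟩ := hrange i j hj.symm
        exact heV k hi
      rw [deltaMap_apply_of_strictMono _ _ _ ha hamem, deltaMap_of_mem _ _ _ hi,
        deltaMap_of_mem _ _ _ hmem]
    · obtain ⟨k, rfl⟩ := hVe i hi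
      exact hcommon k
  · by_cases hj : j ∈ W
    · have hmem : b j ∈ (Finset.univ.image a)ᶜ := by
        simp only [Finset.mem_compl, Finset.mem_image, Finset.mem_univ, true_and]
        rintro ⟨i, hi⟩
        obtain ⟨k, rfl⟩ := hrange i j hi
        rw [hab] at hi
        exact heW k (hb.injective hi ▸ hj)
      rw [deltaMap_apply_of_strictMono _ _ _ hb hbmem, deltaMap_of_mem _ _ _ hj,
        deltaMap_of_mem _ _ _ hmem]
    · obtain ⟨k, rfl⟩ := hWe j hj
      rw [← hab]
      exact hcommon k
end

section
/- Let X be a set and 𝒰 a finite family of nonempty subsets of X that is complete, i.e., closed under nonempty intersections (if U, V ∈ 𝒰 and U ∩ V ≠ ∅ then U ∩ V ∈ 𝒰). Let N𝒰 be the set of nonempty subfamilies J ⊆ 𝒰 with ⋂_{U∈J} U ≠ ∅, ordered by reverse inclusion, and order 𝒰 by inclusion. Then the maps Φ : N𝒰 → 𝒰, Φ(J) = ⋂_{U∈J} U, and Ψ : 𝒰 → N𝒰, Ψ(U) = {V ∈ 𝒰 : U ⊆ V}, are well defined and order preserving; moreover Φ(Ψ(U)) = U for every U ∈ 𝒰,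 and J ⊆ Ψ(Φ(J)) for every J ∈ N𝒰. -/
/-- `Φ(J) = ⋂_{U ∈ J} U`. -/
def nervePhi {X : Type*} (J : Finset (Set X)) : Set X := ⋂ U ∈ J, U

open Classical in
/-- `Ψ(U) = {V ∈ 𝒰 : U ⊆ V}`. -/
noncomputable def nervePsi {X : Type*} (𝒰 : Finset (Set X)) (U : Set X) :
    Finset (Set X) :=
  𝒰.filter (fun V => U ⊆ V)

theorem mem_nervePsi {X : Type*} {𝒰 : Finset (Set X)} {U V : Set X} :
    V ∈ nervePsi 𝒰 U ↔ V ∈ 𝒰 ∧ U ⊆ V := by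
  simp [nervePsi]

theorem nervePhi_subset {X : Type*} {J : Finset (Set X)} {U : Set X} (hU : U ∈ J) :
    nervePhi J ⊆ U :=
  Set.biInter_subset_of_mem hU

theorem nervePhi_anti {X : Type*} {J J' : Finset (Set X)} (h : J' ⊆ J) :
    nervePhi J ⊆ nervePhi J' :=
  Set.biInter_subset_biInter_left h

theorem nervePhi_nervePsi {X : Type*} {𝒰 : Finset (Set X)} {U : Set X} (hU : U ∈ 𝒰) :
    nervePhi (nervePsi 𝒰 U) = U :=
  (nervePhi_subset (mem_nervePsi.2 ⟨hU, subset_rfl⟩)).antisymm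
    (Set.subset_iInter₂ fun _ hV => (mem_nervePsi.1 hV).2)

theorem nervePhi_mem {X : Type*} {𝒰 : Finset (Set X)}
    (hcomp : ∀ U ∈ 𝒰, ∀ V ∈ 𝒰, (U ∩ V).Nonempty → U ∩ V ∈ 𝒰)
    {J : Finset (Set X)} (hJ : J.Nonempty) (hJU : J ⊆ 𝒰) (hne : (nervePhi J).Nonempty) :
    nervePhi J ∈ 𝒰 := by
  induction hJ using Finset.Nonempty.cons_induction with
  | singleton U => simpa [nervePhi] using hJU
  | cons U J hU hJ ih =>
    have hcons : nervePhi (Finset.cons U J hU) = U ∩ nervePhi J := by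
      simp [nervePhi, Set.iInter_iInter_eq_or_left]
    rw [hcons] at hne ⊢
    exact hcomp U (hJU (Finset.mem_cons_self U J)) _
      (ih ((Finset.subset_cons hU).trans hJU) (hne.mono Set.inter_subset_right)) hne

/-- Let `𝒰` be a finite family of nonempty subsets of `X`, closed
under nonempty intersections.  Then `Φ(J) = ⋂_{U∈J} U` (on the nerve `N𝒰`,
ordered by reverse inclusion) and `Ψ(U) = {V ∈ 𝒰 : U ⊆ V}` are well defined and
order preserving; moreover `Φ(Ψ(U)) = U` for every `U ∈ 𝒰` and `J ⊆ Ψ(Φ(J))`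
for every `J ∈ N𝒰`. -/
theorem stmt14 {X : Type*} (𝒰 : Finset (Set X))
    (hne : ∀ U ∈ 𝒰, (U : Set X).Nonempty)
    (hcomp : ∀ U ∈ 𝒰, ∀ V ∈ 𝒰, (U ∩ V).Nonempty → U ∩ V ∈ 𝒰) :
    -- Φ is well defined: it sends the nerve into 𝒰
    (∀ J : Finset (Set X), J.Nonempty → J ⊆ 𝒰 → (nervePhi J).Nonempty →
      nervePhi J ∈ 𝒰) ∧
    -- Φ is order preserving from (N𝒰, ⊇) to (𝒰, ⊆)
    (∀ J J' : Finset (Set X), J' ⊆ J → nervePhi J ⊆ nervePhi J') ∧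
    -- Ψ is well defined: it sends 𝒰 into the nerve
    (∀ U ∈ 𝒰, (nervePsi 𝒰 U).Nonempty ∧ nervePsi 𝒰 U ⊆ 𝒰 ∧
      (nervePhi (nervePsi 𝒰 U)).Nonempty) ∧
    -- Ψ is order preserving from (𝒰, ⊆) to (N𝒰, ⊇)
    (∀ U U' : Set X, U ⊆ U' → nervePsi 𝒰 U' ⊆ nervePsi 𝒰 U) ∧
    -- Φ ∘ Ψ is the identity
    (∀ U ∈ 𝒰, nervePhi (nervePsi 𝒰 U) = U) ∧
    -- J ⊆ Ψ(Φ(J)) for every J in the nerve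
    (∀ J : Finset (Set X), J.Nonempty → J ⊆ 𝒰 → (nervePhi J).Nonempty →
      J ⊆ nervePsi 𝒰 (nervePhi J)) := by
  refine ⟨fun J hJ hJU h => nervePhi_mem hcomp hJ hJU h, fun J J' h => nervePhi_anti h,
    fun U hU => ⟨⟨U, mem_nervePsi.2 ⟨hU, subset_rfl⟩⟩, fun V hV => (mem_nervePsi.1 hV).1, ?_⟩,
    fun U U' h V hV => ?_, fun U hU => nervePhi_nervePsi hU,
    fun J _ hJU _ V hV => mem_nervePsi.2 ⟨hJU hV, nervePhi_subset hV⟩⟩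
  · rw [nervePhi_nervePsi hU]
    exact hne U hU
  · exact mem_nervePsi.2 ⟨(mem_nervePsi.1 hV).1, h.trans (mem_nervePsi.1 hV).2⟩
end

section
/- Let <* = (x<, y<) be a regular double order on a finite set A with n elements, let h : A → {1,…,r} be the unique surjection inducing x<, and let b_p = |{a ∈ A : h(a) ≤ p}| for 0 ≤ p ≤ r (so b₀ = 0, b_r = n). Then there exists exactly one bijection i ↦ a_i from {1,…,n} to A such that: a_i x< a_j iff i ≤ b_p < j for some p, and a_i y< a_j iff b_{p−1} < i < j ≤ b_p for some p. (The monotonic numbering for <* exists and is unique.) -/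
variable {A : Type*}

/-- A finite type with a strict total order has a unique increasing enumeration. -/
theorem existsUnique_equiv_fin_rel_iff_lt {A : Type*} [Fintype A] (s : A → A → Prop)
    [IsStrictTotalOrder A s] :
    ∃! e : Fin (Fintype.card A) ≃ A, ∀ i j, s (e i) (e j) ↔ i < j := by
  classical
  let _ : LinearOrder A := linearOrderOfSTO s
  let f : Fin (Fintype.card A) ≃o A := monoEquivOfFin A rfl
  refine ⟨f.toEquiv, fun i j => f.lt_iff_lt, fun e he => ?_⟩
  have hlt : ∀ i j, e i < e j ↔ i < j := he
  let g : Fin (Fintype.card A) ≃o A := ⟨e, fun {i j} => by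
    rw [← not_lt, ← not_lt, hlt]⟩
  exact congrArg RelIso.toEquiv (Subsingleton.elim g f)

/-- A lower set in `Fin n` is the initial segment whose length is its cardinality. -/
theorem Fin.mem_iff_lt_card_of_isLowerSet {n : ℕ} {S : Finset (Fin n)}
    (hS : IsLowerSet (S : Set (Fin n))) (i : Fin n) : i ∈ S ↔ (i : ℕ) < S.card := by
  constructor
  · intro hi
    have hsub : Finset.Iic i ⊆ S := fun j hj => hS (Finset.mem_Iic.1 hj) hi
    have := Finset.card_le_card hsub
    rw [Fin.card_Iic] at this
    omega
  · intro hlt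
    by_contra hi
    have hsub : S ⊆ Finset.Iio i := fun j hj =>
      Finset.mem_Iio.2 (lt_of_not_ge fun hij => hi (hS hij hj))
    have := Finset.card_le_card hsub
    rw [Fin.card_Iio] at this
    omega

/-- The relation `x ∪ y` of a regular double order is a strict total order. -/
theorem IsRegularDO.isStrictTotalOrder {x y : A → A → Prop} (hreg : IsRegularDO x y) :
    IsStrictTotalOrder A (fun a b => x a b ∨ y a b) := by
  obtain ⟨⟨⟨xirr, xtr⟩, ⟨yirr, ytr⟩, htot⟩, ⟨l, h, -, hi⟩, hxy⟩ := hreg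
  have level : ∀ a b, y a b → h a = h b := fun a b hab =>
    le_antisymm (not_lt.1 fun hlt => (hxy b a ((hi b a).2 hlt)).2 hab)
      (not_lt.1 fun hlt => (hxy a b ((hi a b).2 hlt)).1 hab)
  exact
    { irrefl := fun a ha => ha.elim (xirr a) (yirr a)
      trans := by
        rintro a b c (hab | hab) (hbc | hbc)
        · exact Or.inl (xtr a b c hab hbc)
        · exact Or.inl ((hi a c).2 (level b c hbc ▸ (hi a b).1 hab))
        · exact Or.inl ((hi a c).2 ((level a b hab).symm ▸ (hi b c).1 hbc))
        · exact Or.inr (ytr a b c hab hbc)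
      trichotomous := fun a b hab hba => by
        by_contra hne
        have := htot a b hne
        tauto }

/-- Under an enumeration along which `h` is monotone, the elements with `h a < p` come first. -/
theorem lt_card_filter_iff_of_monotone {A : Type*} [Fintype A] {n : ℕ} {h : A → ℕ}
    (e : Fin n ≃ A) (hmono : Monotone (h ∘ e)) (p : ℕ) (i : Fin n) :
    (i : ℕ) < (Finset.univ.filter (fun a : A => h a < p)).card ↔ h (e i) < p := by
  have hlow : IsLowerSet ((Finset.univ.filter fun j => h (e j) < p : Finset (Fin n)) :
      Set (Fin n)) := fun j k hkj hj => by
    simp only [Finset.coe_filter, Finset.mem_univ, true_and, Set.mem_ofPred_eq] at hj ⊢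
    exact (hmono hkj).trans_lt hj
  have hcard : (Finset.univ.filter fun j => h (e j) < p).card =
      (Finset.univ.filter (fun a : A => h a < p)).card :=
    Finset.card_equiv e (by simp)
  rw [← hcard, ← Fin.mem_iff_lt_card_of_isLowerSet hlow]
  simp

/-- Let `(x,y)` be a regular double order on a finite set `A` with
`n` elements, `h : A → Fin r` the (unique) surjection inducing `x`, and
`b p = |{a : h(a) < p}|` (so `b 0 = 0`, `b r = n`).  Then there is exactly one
bijection `e : Fin n ≃ A` (the monotonic numbering) such that
`x (e i) (e j) ↔ ∃ p, i < b p ≤ j` and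
`y (e i) (e j) ↔ ∃ p, b p ≤ i < j < b (p+1)` (here positions are 0-based). -/
theorem stmt15 {A : Type*} [Fintype A] (x y : A → A → Prop)
    (hreg : IsRegularDO x y)
    (r : ℕ) (h : A → Fin r) (hs : Function.Surjective h)
    (hi : ∀ a b, x a b ↔ h a < h b) :
    ∃! e : Fin (Fintype.card A) ≃ A,
      (∀ i j, x (e i) (e j) ↔ ∃ p : ℕ,
        (i : ℕ) < (Finset.univ.filter (fun a : A => (h a : ℕ) < p)).card ∧
        (Finset.univ.filter (fun a : A => (h a : ℕ) < p)).card ≤ (j : ℕ)) ∧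
      (∀ i j, y (e i) (e j) ↔ ∃ p : ℕ,
        (Finset.univ.filter (fun a : A => (h a : ℕ) < p)).card ≤ (i : ℕ) ∧
        (i : ℕ) < (j : ℕ) ∧
        (j : ℕ) < (Finset.univ.filter (fun a : A => (h a : ℕ) < p + 1)).card) := by
  have := hreg.isStrictTotalOrder
  obtain ⟨⟨-, -, htot⟩, -, hxy⟩ := hreg
  obtain ⟨e, he, huniq⟩ := existsUnique_equiv_fin_rel_iff_lt (fun a b => x a b ∨ y a b)
  refine ⟨e, ?_, fun e' ⟨hx', hy'⟩ => huniq e' fun i j => ?_⟩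
  · have hmono : Monotone ((fun a => (h a : ℕ)) ∘ e) := fun i j hij =>
      not_lt.1 fun hlt => hij.not_gt ((he j i).1 (Or.inl ((hi _ _).2 hlt)))
    have key := lt_card_filter_iff_of_monotone e hmono
    simp only [← not_lt (b := Finset.card _), key]
    refine ⟨fun i j => ?_, fun i j => ?_⟩
    · rw [hi, Fin.lt_def]
      exact ⟨fun hlt => ⟨_, hlt, lt_irrefl _⟩, fun ⟨p, hp, hq⟩ => hp.trans_le (not_lt.1 hq)⟩
    · constructor
      · intro hij
        have hlt := (he i j).1 (Or.inr hij)
        have hle : ¬ h (e i) < h (e j) := fun hlt' => (hxy _ _ ((hi _ _).2 hlt')).1 hij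
        rw [Fin.lt_def] at hle
        exact ⟨h (e i), lt_irrefl _, hlt, by omega⟩
      · rintro ⟨p, hp, hlt, hq⟩
        refine ((he i j).2 hlt).resolve_left fun hx => ?_
        rw [hi, Fin.lt_def] at hx
        omega
  · have fwd : ∀ i j, x (e' i) (e' j) ∨ y (e' i) (e' j) → i < j := by
      rintro i j (hij | hij)
      · obtain ⟨p, hp, hq⟩ := (hx' i j).1 hij
        exact hp.trans_le hq
      · obtain ⟨p, -, hlt, -⟩ := (hy' i j).1 hij
        exact hlt
    refine ⟨fwd i j, fun hlt => ?_⟩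
    have hne : e' i ≠ e' j := e'.injective.ne hlt.ne
    have hnot := fun hji => hlt.not_gt (fwd j i hji)
    have := htot _ _ hne
    tauto
end

section
/- Let <* = (x<, y<) and <*' = (x<', y<') be regular double orders on a finite set A with n elements such that x<' ⊆ x< and y< ⊆ y<' (i.e., <* ⊒ <*'). Write F(<*) = {b₁ < … < b_{r−1}}, F(<*') = {b'₁ < … < b'_{r'−1}}, let (a_i) and (a'_i) be the monotonic numberings of <* and <*' respectively, and let φ be the permutation of {1,…,n} determined by a'_{φ(i)} = a_i. Then F(<*') ⊆ F(<*), and φ satisfies: (x) φ({b'_{p−1}+1, …, b'_p}) = {b'_{p−1}+1, …, b'_p} for every p ∈ {1,…,r'} (with b'₀ = 0, b'_{r'} = n); and (y) φ(b_{p−1}+1) < φ(b_{p−1}+2) < … < φ(b_p) for every p ∈ {1,…,r} (with b₀ = 0, b_r = n). -/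
variable {A : Type*}

/-- If the height function `h` never decreases along the enumeration `e` (i.e. `h (e i) < h (e j)`
forces `i < j`), then the elements of height less than `p` are enumerated first. -/
theorem height_lt_iff_lt_card {A : Type*} [Fintype A] {r : ℕ} (h : A → Fin r)
    (e : Fin (Fintype.card A) ≃ A) (hmono : ∀ i j, h (e i) < h (e j) → i < j)
    (p : ℕ) (i : Fin (Fintype.card A)) :
    (h (e i) : ℕ) < p ↔ (i : ℕ) < (Finset.univ.filter (fun a : A => (h a : ℕ) < p)).card := by
  have hcard : (Finset.univ.filter (fun a : A => (h a : ℕ) < p)).card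
      = (Finset.univ.filter (fun k => (h (e k) : ℕ) < p)).card :=
    (Finset.card_equiv e (by simp)).symm
  have hle : ∀ k j, k ≤ j → h (e k) ≤ h (e j) := fun k j hkj =>
    not_lt.1 fun hlt => absurd (hmono j k hlt) (not_lt.2 hkj)
  rw [hcard]
  constructor
  · intro hp
    have hsub : Finset.Iic i ⊆ Finset.univ.filter (fun k => (h (e k) : ℕ) < p) := fun k hk => by
      have := Fin.le_def.1 (hle k i (Finset.mem_Iic.1 hk))
      simp only [Finset.mem_filter, Finset.mem_univ, true_and]
      omega
    have := Finset.card_le_card hsub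
    rw [Fin.card_Iic] at this
    omega
  · intro hlt
    by_contra hp
    have hsub : Finset.univ.filter (fun k => (h (e k) : ℕ) < p) ⊆ Finset.Iio i := fun k hk => by
      simp only [Finset.mem_filter, Finset.mem_univ, true_and] at hk
      rw [Finset.mem_Iio]
      by_contra hik
      have := Fin.le_def.1 (hle i k (not_lt.1 hik))
      omega
    have := Finset.card_le_card hsub
    rw [Fin.card_Iio] at this
    omega

/-- If `h` refines `h'`, every proper nonempty sublevel set of `h'` is a proper nonempty
sublevel set of `h`. -/
theorem exists_sublevel_eq_of_refines {A : Type*} [Fintype A] {r r' : ℕ} (h : A → Fin r)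
    (h' : A → Fin r') (hs' : Function.Surjective h') (href : ∀ a c, h' a < h' c → h a < h c)
    {p : ℕ} (hp0 : 0 < p) (hp : p < r') :
    ∃ q, 0 < q ∧ q < r ∧ ∀ a, (h a : ℕ) < q ↔ (h' a : ℕ) < p := by
  obtain ⟨a₀, ha₀⟩ := hs' ⟨0, by omega⟩
  obtain ⟨c₀, hc₀⟩ := hs' ⟨p, hp⟩
  obtain ⟨c, hc, hmin⟩ := Finset.exists_min_image
    (Finset.univ.filter (fun a : A => p ≤ (h' a : ℕ))) h ⟨c₀, by simp [hc₀]⟩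
  simp only [Finset.mem_filter, Finset.mem_univ, true_and] at hc hmin
  have hbelow : ∀ a, (h' a : ℕ) < p → (h a : ℕ) < h c := fun a ha =>
    href a c (Fin.lt_def.2 (by omega))
  refine ⟨h c, ?_, (h c).isLt, fun a => ⟨fun ha => ?_, hbelow a⟩⟩
  · have := hbelow a₀ (by simpa [ha₀] using hp0)
    omega
  · by_contra hpa
    have := Fin.le_def.1 (hmin a (not_lt.1 hpa))
    omega

/-- Let `<* = (x,y)` and `<*' = (x',y')` be regular double orders on
a finite set `A` with `n` elements, with `x' ⊆ x` and `y ⊆ y'` (i.e. `<* ⊒ <*'`).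
Let `h, h'` be the unique surjections inducing `x, x'`, with associated functions
`b, b'` (so `F(<*) = {b p : 0 < p < r}` etc.), let `e, e'` be the monotonic
numberings of `<*, <*'`, and let `φ = e'⁻¹ ∘ e` be the permutation of positions
determined by `a'_{φ(i)} = a_i`.  Then `F(<*') ⊆ F(<*)`, `φ` preserves each block
`{i : b' p ≤ i < b' (p+1)}` of `F(<*')` (condition (x)), and `φ` is strictly
increasing on each block `{i : b p ≤ i < b (p+1)}` of `F(<*)` (condition (y)).
(Positions are 0-based.) -/
theorem stmt17 {A : Type*} [Fintype A] (x y x' y' : A → A → Prop)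
    (hreg : IsRegularDO x y) (hreg' : IsRegularDO x' y')
    (hx : ∀ a b, x' a b → x a b) (hy : ∀ a b, y a b → y' a b)
    (r : ℕ) (h : A → Fin r) (hs : Function.Surjective h)
    (hi : ∀ a b, x a b ↔ h a < h b)
    (r' : ℕ) (h' : A → Fin r') (hs' : Function.Surjective h')
    (hi' : ∀ a b, x' a b ↔ h' a < h' b)
    (b b' : ℕ → ℕ)
    (hb : ∀ p, b p = (Finset.univ.filter (fun a : A => (h a : ℕ) < p)).card)
    (hb' : ∀ p, b' p = (Finset.univ.filter (fun a : A => (h' a : ℕ) < p)).card)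
    (e e' : Fin (Fintype.card A) ≃ A)
    (he1 : ∀ i j, x (e i) (e j) ↔ ∃ p : ℕ, (i : ℕ) < b p ∧ b p ≤ (j : ℕ))
    (he2 : ∀ i j, y (e i) (e j) ↔
      ∃ p : ℕ, b p ≤ (i : ℕ) ∧ (i : ℕ) < (j : ℕ) ∧ (j : ℕ) < b (p + 1))
    (he1' : ∀ i j, x' (e' i) (e' j) ↔ ∃ p : ℕ, (i : ℕ) < b' p ∧ b' p ≤ (j : ℕ))
    (he2' : ∀ i j, y' (e' i) (e' j) ↔
      ∃ p : ℕ, b' p ≤ (i : ℕ) ∧ (i : ℕ) < (j : ℕ) ∧ (j : ℕ) < b' (p + 1)) :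
    ((Finset.Ioo 0 r').image b' ⊆ (Finset.Ioo 0 r).image b) ∧
    (∀ (p : ℕ) (i : Fin (Fintype.card A)),
      b' p ≤ (i : ℕ) → (i : ℕ) < b' (p + 1) →
      b' p ≤ ((e.trans e'.symm) i : ℕ) ∧ ((e.trans e'.symm) i : ℕ) < b' (p + 1)) ∧
    (∀ (p : ℕ) (i j : Fin (Fintype.card A)),
      b p ≤ (i : ℕ) → (i : ℕ) < (j : ℕ) → (j : ℕ) < b (p + 1) →
      ((e.trans e'.symm) i : ℕ) < ((e.trans e'.symm) j : ℕ)) := by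
  have href : ∀ a c, h' a < h' c → h a < h c := fun a c hac =>
    (hi a c).1 (hx a c ((hi' a c).2 hac))
  have hmono : ∀ i j, h' (e i) < h' (e j) → i < j := fun i j hij => by
    obtain ⟨p, hip, hpj⟩ := (he1 i j).1 (hx _ _ ((hi' _ _).2 hij))
    exact Fin.lt_def.2 (by omega)
  have hmono' : ∀ i j, h' (e' i) < h' (e' j) → i < j := fun i j hij => by
    obtain ⟨p, hip, hpj⟩ := (he1' i j).1 ((hi' _ _).2 hij)
    exact Fin.lt_def.2 (by omega)
  refine ⟨?_, ?_, ?_⟩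
  · intro m hm
    obtain ⟨p, hp, rfl⟩ := Finset.mem_image.1 hm
    rw [Finset.mem_Ioo] at hp
    obtain ⟨q, hq0, hqr, hq⟩ := exists_sublevel_eq_of_refines h h' hs' href hp.1 hp.2
    refine Finset.mem_image.2 ⟨q, Finset.mem_Ioo.2 ⟨hq0, hqr⟩, ?_⟩
    simp only [hb, hb', hq]
  · intro p i
    have key : ∀ q, (i : ℕ) < b' q ↔ ((e.trans e'.symm) i : ℕ) < b' q := fun q => by
      have h1 := height_lt_iff_lt_card h' e hmono q i
      have h2 := height_lt_iff_lt_card h' e' hmono' q ((e.trans e'.symm) i)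
      rw [← hb'] at h1 h2
      rw [← h1, ← h2]
      simp
    intro hpi hip
    exact ⟨not_lt.1 fun hlt => absurd ((key p).2 hlt) (not_lt.2 hpi), (key (p + 1)).1 hip⟩
  · intro p i j hpi hij hjp
    have hyij := hy _ _ ((he2 i j).2 ⟨p, hpi, hij, hjp⟩)
    obtain ⟨-, -, hlt, -⟩ :=
      (he2' ((e.trans e'.symm) i) ((e.trans e'.symm) j)).1 (by simpa using hyij)
    exact hlt
end

section
/- For every n ≥ 1 and every β ∈ P(Iⁿ)₀¹, there exists exactly one sorted path β' ∈ P(Iⁿ)₀¹ with β ∼ β'. That is, every ∼-equivalence class of monotone paths from (0,…,0) to (1,…,1) in the n-cube contains a unique sorted representative. -/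
open scoped unitInterval

/-- A (coordinatewise) monotone path in the `n`-cube from `(0,…,0)` to `(1,…,1)`:
each coordinate `βᵢ : [0,1] → [0,1]` is continuous and nondecreasing, with
`βᵢ 0 = 0` and `βᵢ 1 = 1`. -/
def IsDiPath {n : ℕ} (β : Fin n → I → I) : Prop :=
  (∀ i, Continuous (β i)) ∧ (∀ i, Monotone (β i)) ∧
  (∀ i, β i 0 = 0) ∧ (∀ i, β i 1 = 1)

/-- The support of the `i`-th coordinate: `{t : 0 < βᵢ t < 1}`. -/
def pathSupp {n : ℕ} (β : Fin n → I → I) (i : Fin n) : Set I :=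
  {t | 0 < β i t ∧ β i t < 1}

/-- One generating step of the equivalence relation `∼`: swapping two adjacent
coordinates with disjoint supports. -/
def SwapStep {n : ℕ} (β β' : Fin n → I → I) : Prop :=
  ∃ (i : ℕ) (hi : i + 1 < n),
    pathSupp β ⟨i, Nat.lt_of_succ_lt hi⟩ ∩ pathSupp β ⟨i + 1, hi⟩ = ∅ ∧
    β' = β ∘ Equiv.swap ⟨i, Nat.lt_of_succ_lt hi⟩ ⟨i + 1, hi⟩

/-- A path is sorted if whenever two adjacent coordinates have disjoint supports,
the support of the first precedes the support of the second: there is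
`t ∈ (0,1)` with `βᵢ t = 1` and `βᵢ₊₁ t = 0`. -/
def IsSorted {n : ℕ} (β : Fin n → I → I) : Prop :=
  ∀ (i : ℕ) (hi : i + 1 < n),
    pathSupp β ⟨i, Nat.lt_of_succ_lt hi⟩ ∩ pathSupp β ⟨i + 1, hi⟩ = ∅ →
    ∃ t : I, 0 < t ∧ t < 1 ∧
      β ⟨i, Nat.lt_of_succ_lt hi⟩ t = 1 ∧ β ⟨i + 1, hi⟩ t = 0

/-- **Newman's lemma**: for a terminating, locally confluent relation, equivalent normal forms
are equal. -/
theorem Relation.EqvGen.eq_of_normal {α : Type*} {r : α → α → Prop}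
    (wf : WellFounded (flip r))
    (lc : ∀ a b c, r a b → r a c → Relation.Join (Relation.ReflTransGen r) b c)
    {x y : α} (h : Relation.EqvGen r x y) (hx : ∀ z, ¬ r x z) (hy : ∀ z, ¬ r y z) : x = y := by
  have conf : ∀ a b c, ReflTransGen r a b → ReflTransGen r a c →
      Join (ReflTransGen r) b c := by
    intro a
    induction a using wf.induction with
    | _ a ih =>
      intro b c hab hac
      rcases hab.cases_head with rfl | ⟨b', hab', hb'⟩
      · exact ⟨c, hac, .refl⟩
      rcases hac.cases_head with rfl | ⟨c', hac', hc'⟩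
      · exact ⟨b, .refl, hab⟩
      obtain ⟨d, hbd, hcd⟩ := lc a b' c' hab' hac'
      obtain ⟨e, hbe, hde⟩ := ih b' hab' b d hb' hbd
      obtain ⟨f, hef, hcf⟩ := ih c' hac' e c (hcd.trans hde) hc'
      exact ⟨f, hbe.trans hef, hcf⟩
  have hj : Join (ReflTransGen r) x y := by
    clear hx hy
    induction h with
    | rel a b h => exact ⟨b, .single h, .refl⟩
    | refl a => exact ⟨a, .refl, .refl⟩
    | symm a b _ ih => exact Std.Symm.symm _ _ ih
    | trans a b c _ _ ih₁ ih₂ =>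
      obtain ⟨d, had, hbd⟩ := ih₁
      obtain ⟨e, hbe, hce⟩ := ih₂
      obtain ⟨f, hdf, hef⟩ := conf b d e hbd hbe
      exact ⟨f, had.trans hdf, hce.trans hef⟩
  obtain ⟨z, hxz, hyz⟩ := hj
  have normal : ∀ {u}, (∀ v, ¬ r u v) → ReflTransGen r u z → u = z := fun hu huz =>
    huz.cases_head.resolve_right fun ⟨v, hv, _⟩ => hu v hv
  exact (normal hx hxz).trans (normal hy hyz).symm

/-- Swapping two adjacent letters of a word that are in the wrong order for `prec`. -/
def DescentStep {α : Type*} (prec : α → α → Prop) {n : ℕ} (w w' : Fin n → α) : Prop :=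
  ∃ i j : Fin n, (j : ℕ) = i + 1 ∧ prec (w j) (w i) ∧ w' = w ∘ Equiv.swap i j

section DescentStep

variable {α : Type*} {prec : α → α → Prop} {n : ℕ}

open Classical in
/-- The number of letters of `w` that precede `x`. -/
noncomputable def letterRank (prec : α → α → Prop) (w : Fin n → α) (x : α) : ℕ :=
  (Finset.univ.filter fun k => prec (w k) x).card

theorem letterRank_comp_perm (w : Fin n → α) (τ : Equiv.Perm (Fin n)) (x : α) :
    letterRank prec (w ∘ τ) x = letterRank prec w x := by
  classical
  unfold letterRank
  refine Finset.card_bij (fun k _ => τ k) (by simp) (by simp) fun k hk => ?_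
  exact ⟨τ.symm k, by simpa using hk, by simp⟩

theorem letterRank_lt [IsStrictOrder α prec] (w : Fin n → α) {i j : Fin n}
    (h : prec (w j) (w i)) : letterRank prec w (w j) < letterRank prec w (w i) := by
  classical
  unfold letterRank
  refine Finset.card_lt_card ((Finset.ssubset_iff_of_subset fun k hk => ?_).2 ⟨j, ?_, ?_⟩)
  · simp only [Finset.mem_filter, Finset.mem_univ, true_and] at hk ⊢
    exact _root_.trans hk h
  · simpa using h
  · simpa using irrefl (w j)

/-- A weighted sum of letter ranks that decreases along `DescentStep`. -/
noncomputable def rankWeight (prec : α → α → Prop) (w : Fin n → α) : ℕ :=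
  ∑ k : Fin n, (n - (k : ℕ)) * letterRank prec w (w k)

theorem rankWeight_lt [IsStrictOrder α prec] {w w' : Fin n → α} (h : DescentStep prec w w') :
    rankWeight prec w' < rankWeight prec w := by
  obtain ⟨i, j, hij, hp, rfl⟩ := h
  have hne : i ≠ j := fun h => by simp [h] at hij
  have hlt := letterRank_lt w hp
  unfold rankWeight
  simp only [letterRank_comp_perm, Function.comp_apply]
  have hj : j ∈ Finset.univ.erase i := by simp [hne.symm]
  rw [← Finset.add_sum_erase _ _ (Finset.mem_univ i), ← Finset.add_sum_erase _ _ hj,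
    ← Finset.add_sum_erase (a := i) Finset.univ _ (Finset.mem_univ i),
    ← Finset.add_sum_erase (a := j) (Finset.univ.erase i) _ hj]
  have hrest : ∑ k ∈ (Finset.univ.erase i).erase j,
        (n - (k : ℕ)) * letterRank prec w (w (Equiv.swap i j k)) =
      ∑ k ∈ (Finset.univ.erase i).erase j, (n - (k : ℕ)) * letterRank prec w (w k) := by
    refine Finset.sum_congr rfl fun k hk => ?_
    simp only [Finset.mem_erase, Finset.mem_univ, and_true] at hk
    rw [Equiv.swap_apply_of_ne_of_ne hk.2 hk.1]
  rw [hrest, Equiv.swap_apply_left, Equiv.swap_apply_right]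
  obtain ⟨m, hm⟩ : ∃ m, n - (j : ℕ) = m := ⟨_, rfl⟩
  have hi : n - (i : ℕ) = m + 1 := by omega
  rw [hm, hi]
  nlinarith

theorem wellFounded_descentStep [IsStrictOrder α prec] :
    WellFounded (flip (DescentStep prec (n := n))) :=
  Subrelation.wf (fun h => rankWeight_lt h) (measure (rankWeight prec)).wf

theorem descentStep_locally_confluent [IsStrictOrder α prec] (w u v : Fin n → α)
    (hu : DescentStep prec w u) (hv : DescentStep prec w v) :
    Relation.Join (Relation.ReflTransGen (DescentStep prec)) u v := by
  obtain ⟨i, j, hij, hp, rfl⟩ := hu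
  obtain ⟨k, l, hkl, hq, rfl⟩ := hv
  wlog hik : (i : ℕ) ≤ k generalizing i j k l
  · exact symm (this k l hkl hq i j hij hp (by omega))
  have hne : i ≠ j := fun h => by simp [h] at hij
  have hne' : k ≠ l := fun h => by simp [h] at hkl
  rcases hik.eq_or_lt with h | h
  · obtain rfl : i = k := Fin.ext h
    obtain rfl : j = l := Fin.ext (by omega)
    exact ⟨_, .refl, .refl⟩
  have hil : i ≠ l := fun h => by subst h; omega
  by_cases hjk : j = k
  · subst hjk
    refine ⟨w ∘ Equiv.swap i l,
      .head ⟨j, l, hkl, ?_, rfl⟩ (.single ⟨i, j, hij, ?_, ?_⟩),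
      .head ⟨i, j, hij, ?_, rfl⟩ (.single ⟨j, l, hkl, ?_, ?_⟩)⟩
    · simpa [Equiv.swap_apply_of_ne_of_ne hil.symm hne'.symm] using _root_.trans hq hp
    · simpa [Equiv.swap_apply_of_ne_of_ne hil.symm hne'.symm,
        Equiv.swap_apply_of_ne_of_ne hne hil] using hq
    · ext x; simp only [Function.comp_apply, Equiv.swap_apply_def]; grind
    · simpa [Equiv.swap_apply_of_ne_of_ne hne hil] using _root_.trans hq hp
    · simpa [Equiv.swap_apply_of_ne_of_ne hil.symm hne'.symm,
        Equiv.swap_apply_of_ne_of_ne hne hil] using hp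
    · ext x; simp only [Function.comp_apply, Equiv.swap_apply_def]; grind
  · have hjl : j ≠ l := fun h => by subst h; omega
    have hik' : i ≠ k := fun h => by subst h; omega
    refine ⟨w ∘ Equiv.swap i j ∘ Equiv.swap k l, .single ⟨k, l, hkl, ?_, rfl⟩,
      .single ⟨i, j, hij, ?_, ?_⟩⟩
    · simpa [Equiv.swap_apply_of_ne_of_ne hil.symm hjl.symm,
        Equiv.swap_apply_of_ne_of_ne hik'.symm (Ne.symm hjk)] using hq
    · simpa [Equiv.swap_apply_of_ne_of_ne hik' hil, Equiv.swap_apply_of_ne_of_ne hjk hjl] using hp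
    · ext x; simp only [Function.comp_apply, Equiv.swap_apply_def]; grind

end DescentStep

/-- `f` and `g` are monotone and `f` reaches `1` before `g` leaves `0`. -/
def Precedes (f g : I → I) : Prop :=
  Monotone f ∧ Monotone g ∧ ∃ t, f t = 1 ∧ g t = 0

instance : IsStrictOrder (I → I) Precedes where
  irrefl := fun f ⟨_, _, t, h₁, h₀⟩ => zero_ne_one (h₀.symm.trans h₁)
  trans := by
    rintro f g h ⟨hf, hg, t, hft, hgt⟩ ⟨-, hh, s, hgs, hhs⟩
    refine ⟨hf, hh, s, ?_, hhs⟩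
    have hts : t ≤ s := by
      by_contra! hst
      have := hg hst.le
      rw [hgs, hgt] at this
      exact absurd this (by simp)
    exact le_antisymm le_top (hft.symm.le.trans (hf hts))

/-- Two continuous monotone functions with disjoint supports are comparable for `Precedes`. -/
theorem precedes_or_precedes {f g : I → I} (hf : Continuous f) (hg : Continuous g)
    (mf : Monotone f) (mg : Monotone g) (f0 : f 0 = 0) (g0 : g 0 = 0) (f1 : f 1 = 1) (g1 : g 1 = 1)
    (hd : ∀ t, ¬ ((0 < f t ∧ f t < 1) ∧ (0 < g t ∧ g t < 1))) :
    Precedes f g ∨ Precedes g f := by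
  obtain ⟨c, hc0, hc1⟩ : ∃ c : I, 0 < c ∧ c < 1 := exists_between zero_lt_one
  obtain ⟨a, ha⟩ : ∃ a, f a = c := mem_range_of_exists_le_of_exists_ge hf
    ⟨0, f0.le.trans hc0.le⟩ ⟨1, hc1.le.trans f1.ge⟩
  obtain ⟨b, hb⟩ : ∃ b, g b = c := mem_range_of_exists_le_of_exists_ge hg
    ⟨0, g0.le.trans hc0.le⟩ ⟨1, hc1.le.trans g1.ge⟩
  wlog hab : a ≤ b generalizing f g a b
  · exact (this hg hf mg mf g0 f0 g1 f1 (fun t h => hd t h.symm) b hb a ha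
      (le_of_not_ge hab)).symm
  left
  have hcover : ∀ s ∈ Set.Icc a b, f s = 1 ∨ g s = 0 := by
    intro s hs
    have h₁ : c ≤ f s := ha ▸ mf hs.1
    have h₂ : g s ≤ c := hb ▸ mg hs.2
    by_contra! hcon
    exact hd s ⟨⟨hc0.trans_le h₁, lt_of_le_of_ne le_top hcon.1⟩,
      ⟨lt_of_le_of_ne bot_le hcon.2.symm, h₂.trans_lt hc1⟩⟩
  have hga : g a = 0 := (hcover a ⟨le_rfl, hab⟩).resolve_left fun h => hc1.ne (ha.symm.trans h)
  have hfb : f b = 1 := (hcover b ⟨hab, le_rfl⟩).resolve_right fun h => hc0.ne' (hb.symm.trans h)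
  obtain ⟨t, -, ht⟩ := isPreconnected_closed_iff.1 (isPreconnected_Icc (a := a) (b := b))
    {s | f s = 1} {s | g s = 0} (isClosed_eq hf continuous_const) (isClosed_eq hg continuous_const)
    hcover ⟨b, ⟨hab, le_rfl⟩, hfb⟩ ⟨a, ⟨le_rfl, hab⟩, hga⟩
  exact ⟨mf, mg, t, ht⟩

theorem Precedes.pathSupp_inter_eq_empty {n : ℕ} {β : Fin n → I → I} {i j : Fin n}
    (h : Precedes (β i) (β j)) : pathSupp β i ∩ pathSupp β j = ∅ := by
  obtain ⟨mi, mj, t, hi, hj⟩ := h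
  refine Set.eq_empty_iff_forall_notMem.2 fun s ⟨hsi, hsj⟩ => ?_
  rcases le_total s t with hst | hts
  · exact (hsj.1.trans_le (mj hst)).ne' hj
  · exact ((mi hts).trans_lt hsi.2).ne hi

section IsDiPath

variable {n : ℕ} {β β' : Fin n → I → I}

theorem IsDiPath.comp_perm (hβ : IsDiPath β) (τ : Equiv.Perm (Fin n)) : IsDiPath (β ∘ τ) :=
  ⟨fun i => hβ.1 (τ i), fun i => hβ.2.1 (τ i), fun i => hβ.2.2.1 (τ i), fun i => hβ.2.2.2 (τ i)⟩

theorem IsDiPath.precedes_or_precedes (hβ : IsDiPath β) {i j : Fin n}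
    (h : pathSupp β i ∩ pathSupp β j = ∅) : Precedes (β i) (β j) ∨ Precedes (β j) (β i) := by
  obtain ⟨hc, hm, h0, h1⟩ := hβ
  exact _root_.precedes_or_precedes (hc i) (hc j) (hm i) (hm j) (h0 i) (h0 j) (h1 i) (h1 j)
    fun t ht => Set.eq_empty_iff_forall_notMem.1 h t ht

theorem SwapStep.symm (h : SwapStep β β') : SwapStep β' β := by
  obtain ⟨i, hi, hd, rfl⟩ := h
  refine ⟨i, hi, ?_, ?_⟩
  · rw [Set.inter_comm] at hd
    simpa [pathSupp] using hd
  · ext x; simp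

theorem SwapStep.isDiPath_iff (h : SwapStep β β') : IsDiPath β ↔ IsDiPath β' := by
  have key : ∀ {γ γ' : Fin n → I → I}, SwapStep γ γ' → IsDiPath γ → IsDiPath γ' := by
    rintro γ _ ⟨i, hi, -, rfl⟩ hγ
    exact hγ.comp_perm _
  exact ⟨key h, key h.symm⟩

theorem DescentStep.swapStep (h : DescentStep Precedes β β') : SwapStep β β' := by
  obtain ⟨⟨i, hi⟩, ⟨_, hj⟩, rfl, hp, rfl⟩ := h
  exact ⟨i, hj, by rw [Set.inter_comm]; exact hp.pathSupp_inter_eq_empty, rfl⟩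

theorem IsDiPath.descentStep_or_of_swapStep (hβ : IsDiPath β) (h : SwapStep β β') :
    DescentStep Precedes β β' ∨ DescentStep Precedes β' β := by
  obtain ⟨i, hi, hd, rfl⟩ := h
  rcases hβ.precedes_or_precedes hd with h | h
  · exact Or.inr ⟨⟨i, Nat.lt_of_succ_lt hi⟩, ⟨i + 1, hi⟩, rfl, by simpa using h, by ext x; simp⟩
  · exact Or.inl ⟨_, _, rfl, h, rfl⟩

theorem IsDiPath.isSorted_iff (hβ : IsDiPath β) :
    IsSorted β ↔ ∀ γ, ¬ DescentStep Precedes β γ := by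
  constructor
  · rintro hs γ ⟨⟨i, hi⟩, ⟨_, hj⟩, rfl, hp, rfl⟩
    obtain ⟨t, -, -, h₁, h₀⟩ :=
      hs i hj (by rw [Set.inter_comm]; exact hp.pathSupp_inter_eq_empty)
    exact irrefl (r := Precedes) _ (_root_.trans hp ⟨hβ.2.1 _, hβ.2.1 _, t, h₁, h₀⟩)
  · intro hn i hi hd
    obtain ⟨-, -, t, h₁, h₀⟩ := (hβ.precedes_or_precedes hd).resolve_right
      fun h => hn _ ⟨_, _, rfl, h, rfl⟩
    refine ⟨t, lt_of_le_of_ne bot_le ?_, lt_of_le_of_ne le_top ?_, h₁, h₀⟩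
    · rintro rfl
      exact zero_ne_one ((hβ.2.2.1 _).symm.trans h₁)
    · rintro rfl
      exact zero_ne_one (h₀.symm.trans (hβ.2.2.2 _))

theorem eqvGen_descentStep_of_eqvGen_swapStep (h : Relation.EqvGen SwapStep β β') :
    (IsDiPath β ↔ IsDiPath β') ∧
      (IsDiPath β → Relation.EqvGen (DescentStep Precedes) β β') := by
  induction h with
  | rel a b h =>
    exact ⟨h.isDiPath_iff, fun ha => (ha.descentStep_or_of_swapStep h).elim (.rel _ _)
      fun h => .symm _ _ (.rel _ _ h)⟩
  | refl a => exact ⟨Iff.rfl, fun _ => .refl a⟩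
  | symm a b _ ih => exact ⟨ih.1.symm, fun hb => .symm _ _ (ih.2 (ih.1.2 hb))⟩
  | trans a b c _ _ ih₁ ih₂ =>
    exact ⟨ih₁.1.trans ih₂.1, fun ha => .trans _ _ _ (ih₁.2 ha) (ih₂.2 (ih₁.1.1 ha))⟩

theorem IsDiPath.exists_isSorted (hβ : IsDiPath β) :
    ∃ β', IsDiPath β' ∧ IsSorted β' ∧ Relation.EqvGen SwapStep β β' := by
  induction β using (wellFounded_descentStep (prec := Precedes)).induction with
  | _ β ih =>
    by_cases hs : IsSorted β
    · exact ⟨β, hβ, hs, .refl β⟩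
    · rw [hβ.isSorted_iff] at hs
      push Not at hs
      obtain ⟨γ, hγ⟩ := hs
      obtain ⟨β', hd, hs', he⟩ := ih γ hγ (hγ.swapStep.isDiPath_iff.1 hβ)
      exact ⟨β', hd, hs', .trans _ _ _ (.rel _ _ hγ.swapStep) he⟩

end IsDiPath

/-- For every `n ≥ 1` and every monotone path `β` in the `n`-cube
from `0` to `1`, there is exactly one sorted path `β'` with `β ∼ β'`, where `∼` is
the equivalence relation generated by swapping adjacent coordinates with disjoint
supports. -/
theorem stmt19 (n : ℕ) (hn : 1 ≤ n) (β : Fin n → I → I) (hβ : IsDiPath β) :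
    ∃! β' : Fin n → I → I,
      IsDiPath β' ∧ IsSorted β' ∧ Relation.EqvGen SwapStep β β' := by
  obtain ⟨β', hd, hs, he⟩ := hβ.exists_isSorted
  refine ⟨β', ⟨hd, hs, he⟩, fun γ ⟨hγd, hγs, hγe⟩ => ?_⟩
  have h := (eqvGen_descentStep_of_eqvGen_swapStep (.trans _ _ _ (.symm _ _ hγe) he)).2 hγd
  exact h.eq_of_normal wellFounded_descentStep descentStep_locally_confluent
    (hγd.isSorted_iff.1 hγs) (hd.isSorted_iff.1 hs)
end
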